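/- arXiv:2602.17629 — 13 statements merged into one kernel-verified Lean document; each statement's English description precedes it below -/
import Mathlib

section
/- Let b > 0 and let ρ₁, ρ₂ : (0,b) → ℝ be continuously differentiable functions such that (1) ρ₁'(t) + ρ₁(t)² ≤ ρ₂'(t) + ρ₂(t)² for every t ∈ (0,b), and (2) lim_{t→0⁺} (ρᵢ(t) − 1/t) = 0 for i ∈ {1,2}. Then ρ₂(t) ≥ ρ₁(t) for every t ∈ (0,b). -/
open Set Filter Topology

/-- **Riccati comparison principle.** If `ρ₁, ρ₂ : (0,b) → ℝ` are `C¹` with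
`ρ₁' + ρ₁² ≤ ρ₂' + ρ₂²` on `(0,b)` and both behave like `1/t` as `t → 0⁺`,
then `ρ₁ ≤ ρ₂` on `(0,b)`. -/
theorem riccati_comparison
    (b : ℝ) (hb : 0 < b)
    (ρ₁ ρ₂ ρ₁' ρ₂' : ℝ → ℝ)
    (hd₁ : ∀ t ∈ Ioo (0:ℝ) b, HasDerivAt ρ₁ (ρ₁' t) t)
    (hd₂ : ∀ t ∈ Ioo (0:ℝ) b, HasDerivAt ρ₂ (ρ₂' t) t)
    (hc₁ : ContinuousOn ρ₁' (Ioo (0:ℝ) b))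
    (hc₂ : ContinuousOn ρ₂' (Ioo (0:ℝ) b))
    (hineq : ∀ t ∈ Ioo (0:ℝ) b, ρ₁' t + (ρ₁ t) ^ 2 ≤ ρ₂' t + (ρ₂ t) ^ 2)
    (hlim₁ : Tendsto (fun t => ρ₁ t - 1 / t) (𝓝[>] (0:ℝ)) (𝓝 0))
    (hlim₂ : Tendsto (fun t => ρ₂ t - 1 / t) (𝓝[>] (0:ℝ)) (𝓝 0)) :
    ∀ t ∈ Ioo (0:ℝ) b, ρ₁ t ≤ ρ₂ t := by
  intro c hc
  by_contra hlt
  push Not at hlt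
  have hsc : ContinuousOn (fun t => ρ₁ t + ρ₂ t) (Ioo (0:ℝ) b) := fun t ht =>
    ((hd₁ t ht).continuousAt.add (hd₂ t ht).continuousAt).continuousWithinAt
  obtain ⟨F, hF⟩ : ∃ F : ℝ → ℝ, ∀ t ∈ Ioo (0:ℝ) b, HasDerivAt F (ρ₁ t + ρ₂ t) t := by
    refine ⟨fun t => ∫ x in c..t, (ρ₁ x + ρ₂ x), fun t ht => ?_⟩
    apply intervalIntegral.integral_hasDerivAt_right
    · exact (hsc.mono (ordConnected_Ioo.uIcc_subset hc ht)).intervalIntegrable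
    · exact hsc.stronglyMeasurableAtFilter isOpen_Ioo t ht
    · exact hsc.continuousAt (isOpen_Ioo.mem_nhds ht)
  have hG : ∀ t ∈ Ioo (0:ℝ) b, HasDerivAt (fun t => (ρ₂ t - ρ₁ t) * Real.exp (F t))
      ((ρ₂' t - ρ₁' t) * Real.exp (F t)
        + (ρ₂ t - ρ₁ t) * (Real.exp (F t) * (ρ₁ t + ρ₂ t))) t := fun t ht =>
    ((hd₂ t ht).sub (hd₁ t ht)).mul (hF t ht).exp
  have hmono : MonotoneOn (fun t => (ρ₂ t - ρ₁ t) * Real.exp (F t)) (Ioo (0:ℝ) b) := by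
    apply monotoneOn_of_deriv_nonneg (convex_Ioo 0 b)
    · exact fun t ht => (hG t ht).continuousAt.continuousWithinAt
    · rw [interior_Ioo]
      exact fun t ht => (hG t ht).differentiableAt.differentiableWithinAt
    · rw [interior_Ioo]
      intro t ht
      rw [(hG t ht).deriv]
      have h1 := hineq t ht
      have h2 := Real.exp_pos (F t)
      have h3 : 0 ≤ Real.exp (F t) * (ρ₂' t + (ρ₂ t) ^ 2 - (ρ₁' t + (ρ₁ t) ^ 2)) :=
        mul_nonneg h2.le (by linarith)
      linarith
  have hev : ∀ᶠ t in 𝓝[>] (0:ℝ), -1 < ρ₁ t - 1 / t ∧ -1 < ρ₂ t - 1 / t :=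
    (hlim₁.eventually (lt_mem_nhds (by norm_num))).and
      (hlim₂.eventually (lt_mem_nhds (by norm_num)))
  obtain ⟨u, hu, hsub⟩ := mem_nhdsGT_iff_exists_Ioo_subset.1 hev
  have hu0 : (0:ℝ) < u := hu
  obtain ⟨d, hd0, hd⟩ := exists_between (lt_min hu0 (lt_min one_pos hc.1))
  obtain ⟨hdu, hd1, hdc⟩ : d < u ∧ d < 1 ∧ d < c := by simpa using hd
  have hIoc : ∀ t ∈ Ioc (0:ℝ) d, t ∈ Ioo (0:ℝ) b := fun t ht =>
    ⟨ht.1, by linarith [ht.2, hc.2]⟩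
  have hFmono : MonotoneOn F (Ioc (0:ℝ) d) := by
    apply monotoneOn_of_deriv_nonneg (convex_Ioc 0 d)
    · exact fun t ht => (hF t (hIoc t ht)).continuousAt.continuousWithinAt
    · intro t ht
      exact (hF t (hIoc t (interior_subset ht))).differentiableAt.differentiableWithinAt
    · intro t ht
      have ht' := interior_subset ht
      rw [(hF t (hIoc t ht')).deriv]
      obtain ⟨h1, h2⟩ := hsub ⟨ht'.1, ht'.2.trans_lt hdu⟩
      have h3 : 1 ≤ 1 / t := by
        rw [le_div_iff₀ ht'.1]; linarith [ht'.2]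
      linarith
  have hw : Tendsto (fun t => ρ₂ t - ρ₁ t) (𝓝[>] (0:ℝ)) (𝓝 0) := by
    have := hlim₂.sub hlim₁
    simpa using this
  have hK : (ρ₂ c - ρ₁ c) * Real.exp (F c) * Real.exp (-F d) < 0 :=
    mul_neg_of_neg_of_pos (mul_neg_of_neg_of_pos (by linarith) (Real.exp_pos _)) (Real.exp_pos _)
  have hev2 := hw.eventually (lt_mem_nhds hK)
  have hev3 : ∀ᶠ t in 𝓝[>] (0:ℝ), t ∈ Ioo (0:ℝ) d := Ioo_mem_nhdsGT hd0
  obtain ⟨t, h1, ht⟩ := (hev2.and hev3).exists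
  have htd : t ∈ Ioc (0:ℝ) d := ⟨ht.1, ht.2.le⟩
  have h2 : (ρ₂ t - ρ₁ t) * Real.exp (F t) ≤ (ρ₂ c - ρ₁ c) * Real.exp (F c) :=
    hmono (hIoc t htd) hc (by linarith [ht.2])
  have h3 : F t ≤ F d := hFmono htd ⟨hd0, le_rfl⟩ ht.2.le
  have hneg : (ρ₂ c - ρ₁ c) * Real.exp (F c) < 0 :=
    mul_neg_of_neg_of_pos (by linarith) (Real.exp_pos _)
  have h4 : ρ₂ t - ρ₁ t ≤ (ρ₂ c - ρ₁ c) * Real.exp (F c) * Real.exp (-F t) := by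
    have h5 := mul_le_mul_of_nonneg_right h2 (Real.exp_pos (-F t)).le
    rwa [mul_assoc, ← Real.exp_add, add_neg_cancel, Real.exp_zero, mul_one] at h5
  have h6 : Real.exp (-F d) ≤ Real.exp (-F t) := Real.exp_le_exp.2 (by linarith)
  have h7 := mul_le_mul_of_nonpos_left h6 hneg.le
  linarith
end

section
/- Let b > 0 and let ρ₁, ρ₂ : (0,b) → ℝ be continuously differentiable functions such that ρ₁'(t) + ρ₁(t)² = ρ₂'(t) + ρ₂(t)² for every t ∈ (0,b) and lim_{t→0⁺} (ρᵢ(t) − 1/t) = 0 for i ∈ {1,2}. Then ρ₁(t) = ρ₂(t) for every t ∈ (0,b). -/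
open Set Filter Topology

/-- **Uniqueness in the Riccati comparison principle.** If `ρ₁, ρ₂ : (0,b) → ℝ`
are `C¹`, satisfy the same Riccati equation `ρ₁' + ρ₁² = ρ₂' + ρ₂²` on `(0,b)`,
and both behave like `1/t` as `t → 0⁺`, then `ρ₁ = ρ₂` on `(0,b)`. -/
theorem riccati_uniqueness
    (b : ℝ) (hb : 0 < b)
    (ρ₁ ρ₂ ρ₁' ρ₂' : ℝ → ℝ)
    (hd₁ : ∀ t ∈ Ioo (0:ℝ) b, HasDerivAt ρ₁ (ρ₁' t) t)
    (hd₂ : ∀ t ∈ Ioo (0:ℝ) b, HasDerivAt ρ₂ (ρ₂' t) t)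
    (hc₁ : ContinuousOn ρ₁' (Ioo (0:ℝ) b))
    (hc₂ : ContinuousOn ρ₂' (Ioo (0:ℝ) b))
    (heq : ∀ t ∈ Ioo (0:ℝ) b, ρ₁' t + (ρ₁ t) ^ 2 = ρ₂' t + (ρ₂ t) ^ 2)
    (hlim₁ : Tendsto (fun t => ρ₁ t - 1 / t) (𝓝[>] (0:ℝ)) (𝓝 0))
    (hlim₂ : Tendsto (fun t => ρ₂ t - 1 / t) (𝓝[>] (0:ℝ)) (𝓝 0)) :
    ∀ t ∈ Ioo (0:ℝ) b, ρ₁ t = ρ₂ t := by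
  intro t ht
  have hSc : ContinuousOn (fun s => ρ₁ s + ρ₂ s) (Ioo (0:ℝ) b) := fun s hs =>
    ((hd₁ s hs).continuousAt.add (hd₂ s hs).continuousAt).continuousWithinAt
  obtain ⟨M, hM⟩ : ∃ M : ℝ, ∀ s ∈ Ioc (0:ℝ) t, -M ≤ ρ₁ s + ρ₂ s := by
    have e1 := hlim₁.eventually (lt_mem_nhds (show (-1:ℝ) < 0 by norm_num))
    have e2 := hlim₂.eventually (lt_mem_nhds (show (-1:ℝ) < 0 by norm_num))
    obtain ⟨δ, hδ, h⟩ := mem_nhdsGT_iff_exists_Ioo_subset.1 (e1.and e2)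
    have hδ0 : (0:ℝ) < δ := hδ
    have hcpt : ContinuousOn (fun s => ρ₁ s + ρ₂ s) (Icc (δ/2) t) :=
      hSc.mono fun s hs => ⟨by linarith [hs.1], by linarith [hs.2, ht.2]⟩
    obtain ⟨m, hm⟩ := (isCompact_Icc.image_of_continuousOn hcpt).bddBelow
    refine ⟨max 2 (-m), fun s hs => ?_⟩
    rcases lt_or_ge s δ with h1 | h1
    · have h2 := h ⟨hs.1, h1⟩
      have h3 : -1 < ρ₁ s - 1 / s := h2.1
      have h4 : -1 < ρ₂ s - 1 / s := h2.2
      have h5 : 0 < 1 / s := one_div_pos.2 hs.1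
      linarith [le_max_left 2 (-m)]
    · have h2 : m ≤ ρ₁ s + ρ₂ s := hm ⟨s, ⟨by linarith, hs.2⟩, rfl⟩
      linarith [le_max_right 2 (-m)]
  set g : ℝ → ℝ := fun s => (ρ₁ s - ρ₂ s) ^ 2 * Real.exp (-(2 * M) * s) with hg
  have hgd : ∀ s ∈ Ioo (0:ℝ) b, HasDerivAt g
      (-2 * (ρ₁ s + ρ₂ s + M) * (ρ₁ s - ρ₂ s) ^ 2 * Real.exp (-(2 * M) * s)) s := by
    intro s hs
    have h1 := (((hd₁ s hs).sub (hd₂ s hs)).pow 2).mul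
      (((hasDerivAt_id s).const_mul (-(2 * M))).exp)
    refine HasDerivAt.congr_deriv (f := g) h1 ?_
    have h2 : ρ₁' s = ρ₂' s + ρ₂ s ^ 2 - ρ₁ s ^ 2 := by linarith [heq s hs]
    simp only [h2, Pi.sub_apply, Pi.pow_apply, id]
    norm_num
    ring
  have hsub : Ioc (0:ℝ) t ⊆ Ioo 0 b := fun s hs => ⟨hs.1, hs.2.trans_lt ht.2⟩
  have hanti : AntitoneOn g (Ioc 0 t) := by
    apply antitoneOn_of_deriv_nonpos (convex_Ioc 0 t)
    · exact fun s hs => (hgd s (hsub hs)).continuousAt.continuousWithinAt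
    · exact fun s hs =>
        (hgd s (hsub (interior_subset hs))).differentiableAt.differentiableWithinAt
    · intro s hs
      have hs' := interior_subset hs
      rw [(hgd s (hsub hs')).deriv]
      have h1 : 0 ≤ ρ₁ s + ρ₂ s + M := by linarith [hM s hs']
      have : 0 ≤ (ρ₁ s + ρ₂ s + M) * (ρ₁ s - ρ₂ s) ^ 2 * Real.exp (-(2 * M) * s) := by
        positivity
      linarith
  have hlim : Tendsto g (𝓝[>] (0:ℝ)) (𝓝 0) := by
    have h1 := (hlim₁.sub hlim₂).pow 2
    have h2 : Tendsto (fun s : ℝ => Real.exp (-(2 * M) * s)) (𝓝[>] (0:ℝ))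
        (𝓝 (Real.exp (-(2 * M) * 0))) :=
      (Continuous.tendsto (by fun_prop) 0).mono_left nhdsWithin_le_nhds
    have h3 := h1.mul h2
    simpa [hg] using h3
  have hle : g t ≤ 0 := by
    apply ge_of_tendsto hlim
    filter_upwards [Ioc_mem_nhdsGT ht.1] with s hs
    exact hanti hs ⟨ht.1, le_rfl⟩ hs.2
  have h1 : (ρ₁ t - ρ₂ t) ^ 2 ≤ 0 := by
    by_contra hcon
    have := mul_pos (not_le.1 hcon) (Real.exp_pos (-(2 * M) * t))
    exact absurd hle (not_le.2 this)
  have h2 : ρ₁ t - ρ₂ t = 0 := pow_eq_zero_iff (two_ne_zero) |>.1 (le_antisymm h1 (sq_nonneg _))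
  linarith
end

section
/- Let b > 0 and let ρ₁, ρ₂ : (0,b) → ℝ be locally Lipschitz functions such that ρ₁'(t) + ρ₁(t)² ≤ ρ₂'(t) + ρ₂(t)² for almost every t ∈ (0,b) (the derivatives existing almost everywhere by Rademacher's theorem), and lim_{t→0⁺} (ρᵢ(t) − 1/t) = 0 for i ∈ {1,2}. Then ρ₂(t) ≥ ρ₁(t) for every t ∈ (0,b). -/
open Set Filter Topology MeasureTheory

lemma ac_of_loc_lip {b x y : ℝ} {f : ℝ → ℝ}
    (h : ∀ t ∈ Ioo (0:ℝ) b, ∃ s ∈ 𝓝 t, ∃ K, LipschitzOnWith K f s)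
    (hx : 0 < x) (hxy : x ≤ y) (hy : y < b) : AbsolutelyContinuousOnInterval f x y := by
  have hl : LocallyLipschitzOn (uIcc x y) f := by
    intro t ht
    rw [uIcc_of_le hxy] at ht
    obtain ⟨s, hs, K, hK⟩ := h t ⟨hx.trans_le ht.1, ht.2.trans_lt hy⟩
    exact ⟨K, s, mem_nhdsWithin_of_mem_nhds hs, hK⟩
  obtain ⟨K, hK⟩ := hl.exists_lipschitzOnWith_of_compact isCompact_uIcc
  exact hK.absolutelyContinuousOnInterval

lemma cont_of_loc_lip {b : ℝ} {f : ℝ → ℝ}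
    (h : ∀ t ∈ Ioo (0:ℝ) b, ∃ s ∈ 𝓝 t, ∃ K, LipschitzOnWith K f s) :
    ContinuousOn f (Ioo 0 b) := by
  intro t ht
  obtain ⟨s, hs, K, hK⟩ := h t ht
  exact (hK.continuousOn.continuousAt hs).continuousWithinAt

/-- **Riccati comparison principle, locally Lipschitz version.** If
`ρ₁, ρ₂ : (0,b) → ℝ` are locally Lipschitz (hence differentiable almost
everywhere by Rademacher's theorem), satisfy `ρ₁' + ρ₁² ≤ ρ₂' + ρ₂²` for almost
every `t ∈ (0,b)`, and both behave like `1/t` as `t → 0⁺`, then `ρ₁ ≤ ρ₂` on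
`(0,b)`. -/
theorem riccati_comparison_locallyLipschitz
    (b : ℝ) (hb : 0 < b)
    (ρ₁ ρ₂ : ℝ → ℝ)
    (hlip₁ : ∀ t ∈ Ioo (0:ℝ) b, ∃ s ∈ 𝓝 t, ∃ K, LipschitzOnWith K ρ₁ s)
    (hlip₂ : ∀ t ∈ Ioo (0:ℝ) b, ∃ s ∈ 𝓝 t, ∃ K, LipschitzOnWith K ρ₂ s)
    (hineq : ∀ᵐ t ∂(volume : Measure ℝ), t ∈ Ioo (0:ℝ) b →
      deriv ρ₁ t + (ρ₁ t) ^ 2 ≤ deriv ρ₂ t + (ρ₂ t) ^ 2)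
    (hlim₁ : Tendsto (fun t => ρ₁ t - 1 / t) (𝓝[>] (0:ℝ)) (𝓝 0))
    (hlim₂ : Tendsto (fun t => ρ₂ t - 1 / t) (𝓝[>] (0:ℝ)) (𝓝 0)) :
    ∀ t ∈ Ioo (0:ℝ) b, ρ₁ t ≤ ρ₂ t := by
  intro t₀ ht₀
  have hc₁ := cont_of_loc_lip hlip₁
  have hc₂ := cont_of_loc_lip hlip₂
  have hs : ContinuousOn (fun t => ρ₁ t + ρ₂ t) (Ioo 0 b) := hc₁.add hc₂
  -- `ρ₁ + ρ₂` is nonnegative near `0`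
  have hev : ∀ᶠ t in 𝓝[>] (0:ℝ), 0 ≤ ρ₁ t + ρ₂ t := by
    have hlt : ∀ᶠ t in 𝓝[>] (0:ℝ), t < 1 :=
      mem_nhdsWithin_of_mem_nhds (Iio_mem_nhds one_pos)
    filter_upwards [hlim₁.eventually (lt_mem_nhds (show (-1:ℝ) < 0 by norm_num)),
      hlim₂.eventually (lt_mem_nhds (show (-1:ℝ) < 0 by norm_num)), hlt,
      self_mem_nhdsWithin] with t h1 h2 h3 h4
    have : 1 ≤ 1 / t := by
      rw [le_div_iff₀ h4]; linarith
    linarith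
  obtain ⟨δ, hδ, hδs⟩ := mem_nhdsGT_iff_exists_Ioo_subset.1 hev
  have hδ : 0 < δ := hδ
  obtain ⟨c, hc0, hc⟩ := exists_between (lt_min hδ ht₀.1)
  have hcδ : c < δ := hc.trans_le (min_le_left _ _)
  have hct : c < t₀ := hc.trans_le (min_le_right _ _)
  have hcb : c ∈ Ioo 0 b := ⟨hc0, hct.trans ht₀.2⟩
  set S : ℝ → ℝ := fun t => ∫ x in c..t, (ρ₁ x + ρ₂ x) with hS
  set E : ℝ → ℝ := fun t => Real.exp (S t) with hE
  have hder : ∀ t ∈ Ioo 0 b, HasStrictDerivAt E (E t * (ρ₁ t + ρ₂ t)) t := by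
    intro t ht
    refine HasStrictDerivAt.exp ?_
    refine intervalIntegral.integral_hasStrictDerivAt_right ?_ ?_ ?_
    · exact (hs.mono (ordConnected_Ioo.uIcc_subset hcb ht)).intervalIntegrable
    · exact hs.stronglyMeasurableAtFilter isOpen_Ioo t ht
    · exact hs.continuousAt (isOpen_Ioo.mem_nhds ht)
  have hlipE : ∀ t ∈ Ioo (0:ℝ) b, ∃ s ∈ 𝓝 t, ∃ K, LipschitzOnWith K E s := by
    intro t ht
    obtain ⟨K, s, hs, h⟩ := (hder t ht).hasStrictFDerivAt.exists_lipschitzOnWith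
    exact ⟨s, hs, K, h⟩
  have hmono : ∀ ε ∈ Ioo 0 c, E ε * (ρ₂ ε - ρ₁ ε) ≤ E t₀ * (ρ₂ t₀ - ρ₁ t₀) := by
    intro ε hε
    have hεt : ε ≤ t₀ := (hε.2.trans hct).le
    have a1 := ac_of_loc_lip hlip₁ hε.1 hεt ht₀.2
    have a2 := ac_of_loc_lip hlip₂ hε.1 hεt ht₀.2
    have aE := ac_of_loc_lip hlipE hε.1 hεt ht₀.2
    have key := aE.integral_deriv_mul_eq_sub (a2.sub a1)
    have hnn : 0 ≤ ∫ x in ε..t₀, deriv E x * (ρ₂ - ρ₁) x + E x * deriv (ρ₂ - ρ₁) x := by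
      refine intervalIntegral.integral_nonneg_of_ae_restrict hεt ?_
      rw [EventuallyLE, ae_restrict_iff' measurableSet_Icc]
      filter_upwards [hineq, a1.ae_differentiableAt, a2.ae_differentiableAt] with x h h1 h2 hx
      have hxb : x ∈ Ioo 0 b := ⟨hε.1.trans_le hx.1, hx.2.trans_lt ht₀.2⟩
      rw [uIcc_of_le hεt] at h1 h2
      rw [(hder x hxb).hasDerivAt.deriv, deriv_sub (h2 hx) (h1 hx)]
      have hEp : 0 ≤ E x := (Real.exp_pos _).le
      have h' := h hxb
      have : 0 ≤ E x * (deriv ρ₂ x + ρ₂ x ^ 2 - (deriv ρ₁ x + ρ₁ x ^ 2)) :=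
        mul_nonneg hEp (by linarith)
      simp only [Pi.zero_apply, Pi.sub_apply]
      nlinarith
    rw [key] at hnn
    simp only [Pi.sub_apply] at hnn
    linarith
  have hE1 : ∀ ε ∈ Ioo 0 c, E ε ≤ 1 := by
    intro ε hε
    refine Real.exp_le_one_iff.2 ?_
    have : 0 ≤ ∫ x in ε..c, (ρ₁ x + ρ₂ x) :=
      intervalIntegral.integral_nonneg hε.2.le fun u hu =>
        hδs ⟨hε.1.trans_le hu.1, hu.2.trans_lt hcδ⟩
    simp only [hS]
    rw [intervalIntegral.integral_symm]
    linarith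
  have hmem : ∀ᶠ ε in 𝓝[>] (0:ℝ), ε ∈ Ioo 0 c := Ioo_mem_nhdsGT hc0
  have hw : Tendsto (fun t => |ρ₂ t - ρ₁ t|) (𝓝[>] (0:ℝ)) (𝓝 0) := by
    have := (hlim₂.sub hlim₁).abs
    simpa using this
  have hlow : ∀ᶠ ε in 𝓝[>] (0:ℝ), -|ρ₂ ε - ρ₁ ε| ≤ E t₀ * (ρ₂ t₀ - ρ₁ t₀) := by
    filter_upwards [hmem] with ε hε
    refine le_trans ?_ (hmono ε hε)
    have h1 := hE1 ε hε
    have h0 : 0 ≤ E ε := (Real.exp_pos _).le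
    have h2 := mul_le_mul_of_nonneg_left (neg_abs_le (ρ₂ ε - ρ₁ ε)) h0
    have h3 := mul_le_mul_of_nonneg_right h1 (abs_nonneg (ρ₂ ε - ρ₁ ε))
    linarith
  have hfin : 0 ≤ E t₀ * (ρ₂ t₀ - ρ₁ t₀) := by
    have := le_of_tendsto hw.neg hlow
    simpa using this
  have := nonneg_of_mul_nonneg_right hfin (Real.exp_pos _)
  linarith
end

section
/- Let b > 0, let ρ₁, ρ₂ : (0,b) → ℝ be continuously differentiable with ρ₁'(t) + ρ₁(t)² ≤ ρ₂'(t) + ρ₂(t)² for every t ∈ (0,b), fix t₀ ∈ (0,b), and define f(t) = ∫_{t₀}^{t} (ρ₁(τ) + ρ₂(τ)) dτ. Then the function t ↦ (ρ₂(t) − ρ₁(t)) e^{f(t)} is nondecreasing on (0,b); in particular, ρ₂(t₂) − ρ₁(t₂) ≥ (ρ₂(t₁) − ρ₁(t₁)) e^{f(t₁) − f(t₂)} for all 0 < t₁ < t₂ < b. -/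
open Set Filter Topology intervalIntegral

/-- **Monotonicity step in the Riccati comparison principle.** If
`ρ₁, ρ₂ : (0,b) → ℝ` are `C¹` with `ρ₁' + ρ₁² ≤ ρ₂' + ρ₂²` on `(0,b)`,
`t₀ ∈ (0,b)` and `f(t) = ∫_{t₀}^{t} (ρ₁ + ρ₂)`, then `(ρ₂ - ρ₁) e^f` is
nondecreasing on `(0,b)`; in particular
`ρ₂(t₂) - ρ₁(t₂) ≥ (ρ₂(t₁) - ρ₁(t₁)) e^{f(t₁) - f(t₂)}` for `0 < t₁ < t₂ < b`. -/
theorem riccati_weighted_difference_monotone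
    (b : ℝ) (hb : 0 < b)
    (ρ₁ ρ₂ ρ₁' ρ₂' : ℝ → ℝ)
    (hd₁ : ∀ t ∈ Ioo (0:ℝ) b, HasDerivAt ρ₁ (ρ₁' t) t)
    (hd₂ : ∀ t ∈ Ioo (0:ℝ) b, HasDerivAt ρ₂ (ρ₂' t) t)
    (hc₁ : ContinuousOn ρ₁' (Ioo (0:ℝ) b))
    (hc₂ : ContinuousOn ρ₂' (Ioo (0:ℝ) b))
    (hineq : ∀ t ∈ Ioo (0:ℝ) b, ρ₁' t + (ρ₁ t) ^ 2 ≤ ρ₂' t + (ρ₂ t) ^ 2)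
    (t₀ : ℝ) (ht₀ : t₀ ∈ Ioo (0:ℝ) b)
    (f : ℝ → ℝ)
    (hf : ∀ t ∈ Ioo (0:ℝ) b, f t = ∫ τ in t₀..t, (ρ₁ τ + ρ₂ τ)) :
    MonotoneOn (fun t => (ρ₂ t - ρ₁ t) * Real.exp (f t)) (Ioo (0:ℝ) b) ∧
    ∀ t₁ t₂ : ℝ, 0 < t₁ → t₁ < t₂ → t₂ < b →
      (ρ₂ t₁ - ρ₁ t₁) * Real.exp (f t₁ - f t₂) ≤ ρ₂ t₂ - ρ₁ t₂ := by
  have hcont : ContinuousOn (fun τ => ρ₁ τ + ρ₂ τ) (Ioo (0:ℝ) b) := fun t ht =>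
    ((hd₁ t ht).continuousAt.add (hd₂ t ht).continuousAt).continuousWithinAt
  have hfd : ∀ t ∈ Ioo (0:ℝ) b, HasDerivAt f (ρ₁ t + ρ₂ t) t := by
    intro t ht
    have hsub : uIcc t₀ t ⊆ Ioo (0:ℝ) b := ordConnected_Ioo.uIcc_subset ht₀ ht
    have h := integral_hasDerivAt_right (hcont.mono hsub).intervalIntegrable
      (hcont.stronglyMeasurableAtFilter isOpen_Ioo t ht)
      (hcont.continuousAt (isOpen_Ioo.mem_nhds ht))
    refine h.congr_of_eventuallyEq ?_
    filter_upwards [isOpen_Ioo.mem_nhds ht] with u hu using hf u hu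
  have hgd : ∀ t ∈ Ioo (0:ℝ) b, HasDerivAt (fun t => (ρ₂ t - ρ₁ t) * Real.exp (f t))
      ((ρ₂' t - ρ₁' t) * Real.exp (f t)
        + (ρ₂ t - ρ₁ t) * (Real.exp (f t) * (ρ₁ t + ρ₂ t))) t := fun t ht =>
    ((hd₂ t ht).sub (hd₁ t ht)).mul (hfd t ht).exp
  have hmono : MonotoneOn (fun t => (ρ₂ t - ρ₁ t) * Real.exp (f t)) (Ioo (0:ℝ) b) := by
    refine monotoneOn_of_deriv_nonneg (convex_Ioo 0 b)
      (fun t ht => (hgd t ht).continuousAt.continuousWithinAt) ?_ ?_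
    · rw [interior_Ioo]
      exact fun t ht => (hgd t ht).differentiableAt.differentiableWithinAt
    · rw [interior_Ioo]
      intro t ht
      rw [(hgd t ht).deriv]
      have h := mul_nonneg (sub_nonneg.2 (hineq t ht)) (Real.exp_pos (f t)).le
      linarith
  refine ⟨hmono, fun t₁ t₂ h0 h12 hb2 => ?_⟩
  have h := hmono ⟨h0, h12.trans hb2⟩ ⟨h0.trans h12, hb2⟩ h12.le
  rw [Real.exp_sub, ← mul_div_assoc, div_le_iff₀ (Real.exp_pos _)]
  exact h
end

section
/- Let k ∈ ℝ, let b ∈ (0, π/√k] (with the convention π/√k = +∞ when k ≤ 0), and let ρ : (0,b) → ℝ be continuously differentiable with ρ'(t) + ρ(t)² ≤ −k for every t ∈ (0,b) and lim_{t→0⁺} (ρ(t) − 1/t) = 0. Then ρ(t) ≤ sn_k'(t)/sn_k(t) for every t ∈ (0,b). -/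
open Set Filter Topology

/-- The function `sn_k`: `sin(√k t)/√k` for `k > 0`, `t` for `k = 0`,
`sinh(√(-k) t)/√(-k)` for `k < 0`. -/
noncomputable def snk (k : ℝ) (t : ℝ) : ℝ :=
  if 0 < k then Real.sin (Real.sqrt k * t) / Real.sqrt k
  else if k = 0 then t
  else Real.sinh (Real.sqrt (-k) * t) / Real.sqrt (-k)

theorem snk_aux (k b : ℝ) (hbk : 0 < k → b ≤ Real.pi / Real.sqrt k) :
    ∃ c : ℝ → ℝ, (∀ t, HasDerivAt (snk k) (c t) t) ∧ (∀ t, HasDerivAt c (-k * snk k t) t) ∧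
      snk k 0 = 0 ∧ ∀ t ∈ Ioo (0:ℝ) b, 0 < snk k t := by
  rcases lt_trichotomy k 0 with h | h | h
  · have hq : 0 < Real.sqrt (-k) := Real.sqrt_pos.2 (by linarith)
    have hqq : Real.sqrt (-k) * Real.sqrt (-k) = -k := Real.mul_self_sqrt (by linarith)
    have e : snk k = fun t => Real.sinh (Real.sqrt (-k) * t) / Real.sqrt (-k) := by
      funext t
      simp [snk, h.ne, h.le]
    rw [e]
    refine ⟨fun t => Real.cosh (Real.sqrt (-k) * t), fun t => ?_, fun t => ?_, by simp, ?_⟩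
    · have := (((hasDerivAt_id' t).const_mul (Real.sqrt (-k))).sinh).div_const (Real.sqrt (-k))
      refine this.congr_deriv ?_
      field_simp
    · have := ((hasDerivAt_id' t).const_mul (Real.sqrt (-k))).cosh
      refine this.congr_deriv ?_
      rw [mul_div_assoc', eq_div_iff hq.ne']
      linear_combination Real.sinh (Real.sqrt (-k) * t) * hqq
    · intro t ht
      exact div_pos (Real.sinh_pos_iff.2 (mul_pos hq ht.1)) hq
  · have e : snk k = fun t => t := by
      funext t
      simp [snk, h]
    rw [e]
    refine ⟨fun _ => 1, fun t => hasDerivAt_id t, fun t => ?_, rfl, fun t ht => ht.1⟩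
    simpa [h] using hasDerivAt_const t (1:ℝ)
  · have hq : 0 < Real.sqrt k := Real.sqrt_pos.2 h
    have hqq : Real.sqrt k * Real.sqrt k = k := Real.mul_self_sqrt h.le
    have e : snk k = fun t => Real.sin (Real.sqrt k * t) / Real.sqrt k := by
      funext t
      simp [snk, h]
    rw [e]
    refine ⟨fun t => Real.cos (Real.sqrt k * t), fun t => ?_, fun t => ?_, by simp, ?_⟩
    · have := (((hasDerivAt_id' t).const_mul (Real.sqrt k)).sin).div_const (Real.sqrt k)
      refine this.congr_deriv ?_
      field_simp
    · have := ((hasDerivAt_id' t).const_mul (Real.sqrt k)).cos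
      refine this.congr_deriv ?_
      rw [mul_div_assoc', eq_div_iff hq.ne']
      linear_combination -Real.sin (Real.sqrt k * t) * hqq
    · intro t ht
      refine div_pos (Real.sin_pos_of_pos_of_lt_pi (mul_pos hq ht.1) ?_) hq
      have := ht.2.trans_le (hbk h)
      rw [lt_div_iff₀ hq] at this
      linarith

/-- **Comparison with the model logarithmic derivative, lower curvature bound.**
Let `k ∈ ℝ` and `b ∈ (0, π/√k]` (with the convention `π/√k = +∞` for `k ≤ 0`).
If `ρ : (0,b) → ℝ` is `C¹`, satisfies `ρ' + ρ² ≤ -k` on `(0,b)` and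
`ρ(t) - 1/t → 0` as `t → 0⁺`, then `ρ(t) ≤ sn_k'(t)/sn_k(t)` on `(0,b)`. -/
theorem riccati_upper_comparison_snk
    (k b : ℝ) (hb : 0 < b) (hbk : 0 < k → b ≤ Real.pi / Real.sqrt k)
    (ρ ρ' : ℝ → ℝ)
    (hd : ∀ t ∈ Ioo (0:ℝ) b, HasDerivAt ρ (ρ' t) t)
    (hc : ContinuousOn ρ' (Ioo (0:ℝ) b))
    (hineq : ∀ t ∈ Ioo (0:ℝ) b, ρ' t + (ρ t) ^ 2 ≤ -k)
    (hlim : Tendsto (fun t => ρ t - 1 / t) (𝓝[>] (0:ℝ)) (𝓝 0)) :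
    ∀ t ∈ Ioo (0:ℝ) b, ρ t ≤ deriv (snk k) t / snk k t := by
  obtain ⟨c, hs, hcd, hs0, hpos⟩ := snk_aux k b hbk
  set s := snk k with hsdef
  have hw : ∀ t ∈ Ioo (0:ℝ) b, HasDerivAt (fun t => s t ^ 2 * ρ t - s t * c t)
      (2 * s t * c t * ρ t + s t ^ 2 * ρ' t - (c t * c t + s t * (-k * s t))) t := by
    intro t ht
    have := (((hs t).pow 2).mul (hd t ht)).sub ((hs t).mul (hcd t))
    refine this.congr_deriv ?_
    simp
  have hanti : AntitoneOn (fun t => s t ^ 2 * ρ t - s t * c t) (Ioo (0:ℝ) b) := by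
    apply antitoneOn_of_deriv_nonpos (convex_Ioo 0 b)
    · intro t ht
      exact (hw t ht).continuousAt.continuousWithinAt
    · intro t ht
      rw [interior_Ioo] at ht
      exact (hw t ht).differentiableAt.differentiableWithinAt
    · intro t ht
      rw [interior_Ioo] at ht
      rw [(hw t ht).deriv]
      nlinarith [sq_nonneg (s t * ρ t - c t),
        mul_le_mul_of_nonneg_left (hineq t ht) (sq_nonneg (s t))]
  have hs_lim : Tendsto s (𝓝[>] (0:ℝ)) (𝓝 0) := by
    have := (hs 0).continuousAt.tendsto
    rw [hs0] at this
    exact this.mono_left nhdsWithin_le_nhds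
  have hc_lim : Tendsto c (𝓝[>] (0:ℝ)) (𝓝 (c 0)) :=
    (hcd 0).continuousAt.tendsto.mono_left nhdsWithin_le_nhds
  have hslope : Tendsto (fun t => t⁻¹ * s t) (𝓝[>] (0:ℝ)) (𝓝 (c 0)) := by
    have := (hs 0).tendsto_slope_zero_right
    simpa [hs0] using this
  have hlim0 : Tendsto (fun t => s t ^ 2 * ρ t - s t * c t) (𝓝[>] (0:ℝ)) (𝓝 0) := by
    have h1 := (((hs_lim.pow 2).mul hlim).add (hs_lim.mul hslope)).sub (hs_lim.mul hc_lim)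
    simp only [zero_mul, mul_zero, add_zero, sub_zero] at h1
    refine h1.congr fun t => ?_
    rw [one_div]
    ring
  intro t ht
  rw [(hs t).deriv, le_div_iff₀ (hpos t ht)]
  have hle : s t ^ 2 * ρ t - s t * c t ≤ 0 := by
    refine ge_of_tendsto hlim0 ?_
    filter_upwards [Ioo_mem_nhdsGT ht.1] with u hu
    exact hanti ⟨hu.1, hu.2.trans ht.2⟩ ht hu.2.le
  have hp := hpos t ht
  by_contra! hcon
  nlinarith [mul_pos hp (sub_pos.2 hcon)]
end

section
/- Let K ≤ 0, let b > 0, and let ρ : (0,b) → ℝ be continuously differentiable with ρ'(t) + ρ(t)² ≥ −K for every t ∈ (0,b) and lim_{t→0⁺} (ρ(t) − 1/t) = 0. Then ρ(t) ≥ 1/t > 0 for every t ∈ (0,b). -/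
open Set Filter Topology

/-- **Analytic core of the Cartan–Hadamard theorem.** If `K ≤ 0`, `b > 0` and
`ρ : (0,b) → ℝ` is `C¹` with `ρ' + ρ² ≥ -K` on `(0,b)` and `ρ(t) - 1/t → 0` as
`t → 0⁺`, then `ρ(t) ≥ 1/t > 0` for every `t ∈ (0,b)`. -/
theorem riccati_positivity_nonpositive_curvature
    (K b : ℝ) (hK : K ≤ 0) (hb : 0 < b)
    (ρ ρ' : ℝ → ℝ)
    (hd : ∀ t ∈ Ioo (0:ℝ) b, HasDerivAt ρ (ρ' t) t)
    (hc : ContinuousOn ρ' (Ioo (0:ℝ) b))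
    (hineq : ∀ t ∈ Ioo (0:ℝ) b, -K ≤ ρ' t + (ρ t) ^ 2)
    (hlim : Tendsto (fun t => ρ t - 1 / t) (𝓝[>] (0:ℝ)) (𝓝 0)) :
    ∀ t ∈ Ioo (0:ℝ) b, 1 / t ≤ ρ t ∧ 0 < 1 / t := by
  intro t₀ ht₀
  have h1 : 0 < 1 / t₀ := one_div_pos.mpr ht₀.1
  refine ⟨?_, h1⟩
  by_contra hneg
  push Not at hneg
  set u : ℝ → ℝ := fun t => ρ t - 1 / t with hu
  have hud : ∀ t ∈ Ioo (0:ℝ) b, HasDerivAt u (ρ' t + 1 / t ^ 2) t := by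
    intro t ht
    have := (hd t ht).sub (hasDerivAt_inv (ne_of_gt ht.1))
    have e1 : u = ρ - fun y => y⁻¹ := by
      funext x
      simp [hu]
    have e2 : ρ' t + 1 / t ^ 2 = ρ' t - -(t ^ 2)⁻¹ := by simp
    rw [e1, e2]
    exact this
  set U : ℝ → ℝ := Function.update u 0 0 with hU
  have hUu : ∀ t, 0 < t → U t = u t := fun t ht => by
    rw [hU, Function.update_of_ne ht.ne']
  have hUc : ContinuousOn U (Icc 0 t₀) := by
    intro t ht
    rcases eq_or_lt_of_le ht.1 with h | h
    · subst h
      rw [hU, continuousWithinAt_update_same]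
      refine hlim.mono_left (nhdsWithin_mono _ ?_)
      rintro x ⟨hx, hx0⟩
      exact lt_of_le_of_ne hx.1 (Ne.symm hx0)
    · have hc1 : ContinuousAt u t := (hud t ⟨h, ht.2.trans_lt ht₀.2⟩).continuousAt
      refine (hc1.congr ?_).continuousWithinAt
      filter_upwards [lt_mem_nhds h] with x hx using (hUu x hx).symm
  let S : Set ℝ := Icc 0 t₀ ∩ U ⁻¹' (Ici 0)
  have hScl : IsClosed S := hUc.preimage_isClosed_of_isClosed isClosed_Icc isClosed_Ici
  have hSc : IsCompact S := isCompact_Icc.of_isClosed_subset hScl inter_subset_left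
  have hSne : S.Nonempty := ⟨0, ⟨le_refl _, ht₀.1.le⟩, by simp [hU]⟩
  obtain ⟨a, haS, hamax⟩ := hSc.exists_isGreatest hSne
  have hut0 : u t₀ < 0 := by simp only [hu]; linarith
  have hat : a < t₀ := by
    refine lt_of_le_of_ne haS.1.2 ?_
    rintro rfl
    have h2 : 0 ≤ U a := haS.2
    rw [hUu a ht₀.1] at h2
    linarith
  have hun : ∀ s, a < s → s ≤ t₀ → u s < 0 := by
    intro s hs hs'
    by_contra h
    push Not at h
    have h0 : 0 < s := haS.1.1.trans_lt hs
    have : s ∈ S := ⟨⟨h0.le, hs'⟩, by simpa [hUu s h0] using h⟩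
    exact absurd (hamax this) (not_le.mpr hs)
  have hder : ∀ s, a < s → s ≤ t₀ →
      HasDerivAt (fun s => (u s)⁻¹ - s) (-(ρ' s + 1 / s ^ 2) / (u s) ^ 2 - 1) s := by
    intro s hs hs'
    exact ((hud s ⟨haS.1.1.trans_lt hs, hs'.trans_lt ht₀.2⟩).fun_inv (hun s hs hs').ne).sub
      (hasDerivAt_id s)
  have hbd : ∀ s, a < s → s ≤ t₀ → 1 ≤ -(t₀ - (u t₀)⁻¹) * U s := by
    intro s hs hs'
    have hs0 : 0 < s := haS.1.1.trans_lt hs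
    have hanti : AntitoneOn (fun s => (u s)⁻¹ - s) (Icc s t₀) := by
      apply antitoneOn_of_deriv_nonpos (convex_Icc _ _)
      · intro x hx
        exact (hder x (hs.trans_le hx.1) hx.2).continuousAt.continuousWithinAt
      · intro x hx
        rw [interior_Icc] at hx
        exact (hder x (hs.trans hx.1) hx.2.le).differentiableAt.differentiableWithinAt
      · intro x hx
        rw [interior_Icc] at hx
        rw [(hder x (hs.trans hx.1) hx.2.le).deriv]
        have hx0 : 0 < x := hs0.trans hx.1
        have hux := hun x (hs.trans hx.1) hx.2.le
        have hi := hineq x ⟨hx0, hx.2.trans ht₀.2⟩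
        rw [sub_nonpos, div_le_one (sq_pos_of_neg hux)]
        have he : ρ x = u x + 1 / x := by simp [hu]
        rw [he] at hi
        have hp : 0 < 1 / x := one_div_pos.mpr hx0
        have hq : 1 / x ^ 2 = (1 / x) ^ 2 := by simp
        rw [hq]
        nlinarith [mul_neg_of_neg_of_pos hux hp]
    have h3 := hanti (left_mem_Icc.mpr hs') (right_mem_Icc.mpr hs') hs'
    simp only at h3
    have hus := hun s hs hs'
    rw [hUu s hs0]
    have h4 : (u s)⁻¹ * u s = 1 := inv_mul_cancel₀ hus.ne
    have h5 : -(t₀ - (u t₀)⁻¹) ≤ (u s)⁻¹ := by linarith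
    nlinarith [mul_le_mul_of_nonpos_right h5 hus.le]
  have hta : Tendsto (fun s => -(t₀ - (u t₀)⁻¹) * U s) (𝓝[Ioc a t₀] a)
      (𝓝 (-(t₀ - (u t₀)⁻¹) * U a)) :=
    (((hUc a haS.1).mono fun x hx => ⟨haS.1.1.trans hx.1.le, hx.2⟩).tendsto).const_mul _
  have : (𝓝[Ioc a t₀] a).NeBot := by
    rw [nhdsWithin_Ioc_eq_nhdsGT hat]; infer_instance
  have hge := ge_of_tendsto hta (by
    filter_upwards [self_mem_nhdsWithin] with s hs using hbd s hs.1 hs.2)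
  have h6 : (u t₀)⁻¹ < 0 := inv_lt_zero.mpr hut0
  have h7 : 0 ≤ U a := haS.2
  nlinarith [mul_nonneg (by linarith [ht₀.1] : 0 ≤ t₀ - (u t₀)⁻¹) h7]
end

section
/- Let I ⊆ ℝ be an open interval and let A : I → Mat(n×n, ℝ) be a map with A(r) symmetric for every r, differentiable at a point r₀ ∈ I. Suppose the function λ_max(r) (the largest eigenvalue of A(r)) is differentiable at r₀, and let w ∈ ℝⁿ be a unit vector with A(r₀)w = λ_max(r₀)w. Then λ_max'(r₀) = ⟨A'(r₀)w, w⟩, where ⟨·,·⟩ is the standard Euclidean inner product on ℝⁿ. The analogous identity holds for the smallest eigenvalue λ_min with a corresponding unit eigenvector. -/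
open Set Filter Topology Matrix

/-- `μ` is the largest (real) eigenvalue of the matrix `A`. -/
def IsMaxEigenvalue {n : ℕ} (A : Matrix (Fin n) (Fin n) ℝ) (μ : ℝ) : Prop :=
  (∃ v : Fin n → ℝ, v ≠ 0 ∧ A.mulVec v = μ • v) ∧
  ∀ μ' : ℝ, (∃ v : Fin n → ℝ, v ≠ 0 ∧ A.mulVec v = μ' • v) → μ' ≤ μ

/-- `μ` is the smallest (real) eigenvalue of the matrix `A`. -/
def IsMinEigenvalue {n : ℕ} (A : Matrix (Fin n) (Fin n) ℝ) (μ : ℝ) : Prop :=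
  (∃ v : Fin n → ℝ, v ≠ 0 ∧ A.mulVec v = μ • v) ∧
  ∀ μ' : ℝ, (∃ v : Fin n → ℝ, v ≠ 0 ∧ A.mulVec v = μ' • v) → μ ≤ μ'

theorem rayleigh_le_max_aux {n : ℕ} (B : Matrix (Fin n) (Fin n) ℝ) (hB : B.IsSymm) (μ : ℝ)
    (h : ∀ μ' : ℝ, (∃ v : Fin n → ℝ, v ≠ 0 ∧ B.mulVec v = μ' • v) → μ' ≤ μ)
    (v : Fin n → ℝ) : B.mulVec v ⬝ᵥ v ≤ μ * (v ⬝ᵥ v) := by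
  have hH : (μ • (1 : Matrix (Fin n) (Fin n) ℝ) - B).IsHermitian := by
    rw [Matrix.IsHermitian, Matrix.conjTranspose_eq_transpose_of_trivial]
    simp [hB.eq]
  have hP : (μ • (1 : Matrix (Fin n) (Fin n) ℝ) - B).PosSemidef := by
    rw [hH.posSemidef_iff_eigenvalues_nonneg]
    intro i
    have h1 := hH.mulVec_eigenvectorBasis i
    have h2 := h (μ - hH.eigenvalues i) ⟨(hH.eigenvectorBasis i).ofLp, by
      intro h0
      apply hH.eigenvectorBasis.orthonormal.ne_zero i
      ext j
      exact congrFun h0 j, by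
      rw [Matrix.sub_mulVec, Matrix.smul_mulVec, Matrix.one_mulVec] at h1
      rw [sub_smul, ← h1]
      abel⟩
    show (0 : ℝ) ≤ hH.eigenvalues i
    linarith
  have h3 := hP.dotProduct_mulVec_nonneg v
  rw [Matrix.sub_mulVec, Matrix.smul_mulVec, Matrix.one_mulVec] at h3
  simp only [star_trivial, dotProduct_sub, dotProduct_smul, smul_eq_mul] at h3
  rw [dotProduct_comm]
  linarith

theorem max_deriv_aux {n : ℕ} (a b r₀ : ℝ) (hr₀ : r₀ ∈ Ioo a b)
    (A : ℝ → Matrix (Fin n) (Fin n) ℝ)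
    (hsym : ∀ r ∈ Ioo a b, (A r).IsSymm)
    (A' : Matrix (Fin n) (Fin n) ℝ)
    (hA' : ∀ i j, HasDerivAt (fun r => A r i j) (A' i j) r₀)
    (l : ℝ → ℝ)
    (hl : ∀ r ∈ Ioo a b, ∀ μ' : ℝ,
      (∃ v : Fin n → ℝ, v ≠ 0 ∧ (A r).mulVec v = μ' • v) → μ' ≤ l r)
    (w : Fin n → ℝ) (hw : w ⬝ᵥ w = 1) (hwe : (A r₀).mulVec w = l r₀ • w)
    (d : ℝ) (hd : HasDerivAt l d r₀) : d = A'.mulVec w ⬝ᵥ w := by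
  have hq : HasDerivAt (fun r => (A r).mulVec w ⬝ᵥ w) (A'.mulVec w ⬝ᵥ w) r₀ := by
    simp only [Matrix.mulVec, dotProduct]
    refine HasDerivAt.fun_sum fun i _ => HasDerivAt.mul_const ?_ _
    exact HasDerivAt.fun_sum fun j _ => (hA' i j).mul_const _
  have hmin : IsLocalMin (fun r => l r - (A r).mulVec w ⬝ᵥ w) r₀ := by
    filter_upwards [isOpen_Ioo.mem_nhds hr₀] with r hr
    have h1 := rayleigh_le_max_aux (A r) (hsym r hr) (l r) (hl r hr) w
    rw [hw] at h1
    simp only [hwe, smul_dotProduct, hw, smul_eq_mul]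
    linarith
  have := hmin.hasDerivAt_eq_zero (hd.fun_sub hq)
  linarith

/-- **Derivative of the extremal eigenvalues.** Let `A : (a,b) → Mat(n×n,ℝ)`
take symmetric values and be differentiable at `r₀ ∈ (a,b)`, with derivative
matrix `A'`. If the largest eigenvalue function `λ_max` is differentiable at
`r₀` with derivative `dmax`, and `w` is a unit eigenvector of `A(r₀)` for
`λ_max(r₀)`, then `dmax = ⟨A' w, w⟩`; and the analogous identity holds for the
smallest eigenvalue. -/
theorem extremal_eigenvalue_deriv {n : ℕ} (a b r₀ : ℝ) (hr₀ : r₀ ∈ Ioo a b)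
    (A : ℝ → Matrix (Fin n) (Fin n) ℝ)
    (hsym : ∀ r ∈ Ioo a b, (A r).IsSymm)
    (A' : Matrix (Fin n) (Fin n) ℝ)
    (hA' : ∀ i j, HasDerivAt (fun r => A r i j) (A' i j) r₀)
    (lmax lmin : ℝ → ℝ)
    (hlmax : ∀ r ∈ Ioo a b, IsMaxEigenvalue (A r) (lmax r))
    (hlmin : ∀ r ∈ Ioo a b, IsMinEigenvalue (A r) (lmin r))
    (w : Fin n → ℝ) (hw : w ⬝ᵥ w = 1) (hwe : (A r₀).mulVec w = lmax r₀ • w)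
    (w' : Fin n → ℝ) (hw' : w' ⬝ᵥ w' = 1) (hwe' : (A r₀).mulVec w' = lmin r₀ • w')
    (dmax dmin : ℝ)
    (hdmax : HasDerivAt lmax dmax r₀)
    (hdmin : HasDerivAt lmin dmin r₀) :
    dmax = A'.mulVec w ⬝ᵥ w ∧ dmin = A'.mulVec w' ⬝ᵥ w' := by
  refine ⟨max_deriv_aux a b r₀ hr₀ A hsym A' hA' lmax (fun r hr => (hlmax r hr).2) w hw hwe
    dmax hdmax, ?_⟩
  have h := max_deriv_aux a b r₀ hr₀ (fun r => - A r)
    (fun r hr => (hsym r hr).neg) (-A') (fun i j => (hA' i j).fun_neg)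
    (fun r => - lmin r) (fun r hr μ' hv => by
      obtain ⟨v, hv0, hv⟩ := hv
      have := (hlmin r hr).2 (-μ') ⟨v, hv0, by
        rw [neg_smul, ← hv, Matrix.neg_mulVec, neg_neg]⟩
      linarith) w' hw' (by rw [Matrix.neg_mulVec, hwe', neg_smul]) (-dmin) hdmin.fun_neg
  rw [Matrix.neg_mulVec, neg_dotProduct] at h
  linarith
end

section
/- Let I ⊆ ℝ be an open interval and let S, R : I → Mat(n×n, ℝ) be maps with S(r) and R(r) symmetric for every r ∈ I, S differentiable, and satisfying the matrix Riccati equation S'(r) = −S(r)² − R(r) for every r ∈ I. Let μ_max(r) denote the largest eigenvalue of S(r). Then at every point r₀ ∈ I where μ_max is differentiable, μ_max'(r₀) ≤ −μ_max(r₀)² − λ_min(R(r₀)), where λ_min(R(r₀)) denotes the smallest eigenvalue of the symmetric matrix R(r₀). -/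
open Set Filter Topology Matrix

theorem rayleigh_aux {n : ℕ} (A : Matrix (Fin n) (Fin n) ℝ) (hA : A.IsSymm) (μ : ℝ)
    (h : ∀ μ' : ℝ, (∃ v : Fin n → ℝ, v ≠ 0 ∧ A.mulVec v = μ' • v) → μ' ≤ μ)
    (v : Fin n → ℝ) : v ⬝ᵥ A.mulVec v ≤ μ * (v ⬝ᵥ v) := by
  have hB : (μ • (1 : Matrix (Fin n) (Fin n) ℝ) - A).IsHermitian := by
    unfold Matrix.IsHermitian
    rw [Matrix.conjTranspose_eq_transpose_of_trivial, Matrix.transpose_sub,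
      Matrix.transpose_smul, Matrix.transpose_one, hA.eq]
  have hP : (μ • (1 : Matrix (Fin n) (Fin n) ℝ) - A).PosSemidef := by
    rw [hB.posSemidef_iff_eigenvalues_nonneg]
    intro i
    have h1 := hB.mulVec_eigenvectorBasis i
    rw [Matrix.sub_mulVec, Matrix.smul_mulVec, Matrix.one_mulVec] at h1
    have h2 := h (μ - hB.eigenvalues i) ⟨⇑(hB.eigenvectorBasis i), ?_, ?_⟩
    · simp only [Pi.zero_apply]; linarith
    · intro h0
      apply hB.eigenvectorBasis.orthonormal.ne_zero i
      ext j
      exact congrFun h0 j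
    · rw [sub_smul, ← h1]; abel
  have h3 := hP.dotProduct_mulVec_nonneg v
  rw [star_trivial, Matrix.sub_mulVec, Matrix.smul_mulVec, Matrix.one_mulVec,
    dotProduct_sub, dotProduct_smul, smul_eq_mul] at h3
  linarith

/-- **Riccati inequality for the largest eigenvalue.** Let `S, R : (a,b) →
Mat(n×n,ℝ)` take symmetric values, with `S` differentiable and satisfying the
matrix Riccati equation `S' = -S² - R`. If the largest eigenvalue function
`μ_max` of `S` is differentiable at `r₀ ∈ (a,b)` with derivative `m`, then
`m ≤ -μ_max(r₀)² - λ_min(R(r₀))`. -/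
theorem mu_max_riccati_inequality {n : ℕ} (a b : ℝ)
    (S R : ℝ → Matrix (Fin n) (Fin n) ℝ)
    (hSsym : ∀ r ∈ Ioo a b, (S r).IsSymm)
    (hRsym : ∀ r ∈ Ioo a b, (R r).IsSymm)
    (hODE : ∀ r ∈ Ioo a b, ∀ i j,
      HasDerivAt (fun s => S s i j) ((-(S r * S r) - R r) i j) r)
    (μmax : ℝ → ℝ)
    (hμ : ∀ r ∈ Ioo a b, IsMaxEigenvalue (S r) (μmax r))
    (r₀ : ℝ) (hr₀ : r₀ ∈ Ioo a b)
    (m : ℝ) (hm : HasDerivAt μmax m r₀)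
    (lR : ℝ) (hlR : IsMinEigenvalue (R r₀) lR) :
    m ≤ -(μmax r₀) ^ 2 - lR := by
  obtain ⟨⟨v, hv0, hv⟩, -⟩ := hμ r₀ hr₀
  have hvv : 0 < v ⬝ᵥ v := by
    have := Matrix.dotProduct_star_self_pos_iff.mpr hv0
    simpa using this
  have hR : lR * (v ⬝ᵥ v) ≤ v ⬝ᵥ (R r₀).mulVec v := by
    have := rayleigh_aux (-(R r₀)) (by
      unfold Matrix.IsSymm
      rw [Matrix.transpose_neg, (hRsym r₀ hr₀).eq]) (-lR) (by
      rintro μ' ⟨w, hw0, hw⟩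
      have := hlR.2 (-μ') ⟨w, hw0, by
        rw [neg_smul, ← hw, Matrix.neg_mulVec, neg_neg]⟩
      linarith) v
    rw [Matrix.neg_mulVec, dotProduct_neg] at this
    linarith
  have hD : HasDerivAt (fun s => v ⬝ᵥ (S s).mulVec v)
      (v ⬝ᵥ (-(S r₀ * S r₀) - R r₀).mulVec v) r₀ := by
    simp only [dotProduct, Matrix.mulVec]
    exact HasDerivAt.fun_sum fun i _ => HasDerivAt.const_mul _
      (HasDerivAt.fun_sum fun j _ => (hODE r₀ hr₀ i j).mul_const _)
  have hF := hD.sub (hm.mul_const (v ⬝ᵥ v))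
  have hmax : IsLocalMax ((fun s => v ⬝ᵥ (S s).mulVec v) - fun s => μmax s * (v ⬝ᵥ v)) r₀ := by
    filter_upwards [isOpen_Ioo.mem_nhds hr₀] with s hs
    have h1 := rayleigh_aux (S s) (hSsym s hs) (μmax s) (hμ s hs).2 v
    simp only [Pi.sub_apply]
    rw [hv, dotProduct_smul, smul_eq_mul]
    linarith
  have hz := hmax.hasDerivAt_eq_zero hF
  rw [Matrix.sub_mulVec, Matrix.neg_mulVec, ← Matrix.mulVec_mulVec, hv, Matrix.mulVec_smul, hv,
    dotProduct_sub, dotProduct_neg, dotProduct_smul, dotProduct_smul, smul_eq_mul,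
    smul_eq_mul] at hz
  refine le_of_mul_le_mul_right ?_ hvv
  nlinarith
end

section
/- Let I ⊆ ℝ be an open interval and let S, R : I → Mat(n×n, ℝ) be maps with S(r) and R(r) symmetric for every r ∈ I, S differentiable, and satisfying the matrix Riccati equation S'(r) = −S(r)² − R(r) for every r ∈ I. Let μ_min(r) denote the smallest eigenvalue of S(r). Then at every point r₀ ∈ I where μ_min is differentiable, μ_min'(r₀) ≥ −μ_min(r₀)² − λ_max(R(r₀)), where λ_max(R(r₀)) denotes the largest eigenvalue of the symmetric matrix R(r₀). -/
open Set Filter Topology Matrix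

lemma min_eig_quad {n : ℕ} (A : Matrix (Fin n) (Fin n) ℝ) (hA : A.IsSymm) (μ : ℝ)
    (h : ∀ μ' : ℝ, (∃ v : Fin n → ℝ, v ≠ 0 ∧ A.mulVec v = μ' • v) → μ ≤ μ')
    (v : Fin n → ℝ) : μ * (v ⬝ᵥ v) ≤ v ⬝ᵥ (A *ᵥ v) := by
  have hB : (A - μ • (1 : Matrix (Fin n) (Fin n) ℝ)).IsHermitian := by
    rw [Matrix.IsHermitian, Matrix.conjTranspose_eq_transpose_of_trivial, Matrix.transpose_sub,
      Matrix.transpose_smul, Matrix.transpose_one, hA.eq]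
  have hp : (A - μ • (1 : Matrix (Fin n) (Fin n) ℝ)).PosSemidef := by
    rw [hB.posSemidef_iff_eigenvalues_nonneg]
    intro j
    have h1 := hB.mulVec_eigenvectorBasis j
    have h2 := h (hB.eigenvalues j + μ) ⟨(hB.eigenvectorBasis j).ofLp, ?_, ?_⟩
    · simpa using h2
    · intro h0
      apply hB.eigenvectorBasis.toBasis.ne_zero j
      ext i
      simpa using congrFun h0 i
    · rw [Matrix.sub_mulVec, Matrix.smul_mulVec, Matrix.one_mulVec, sub_eq_iff_eq_add] at h1
      rw [h1, add_smul]
  have := hp.dotProduct_mulVec_nonneg v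
  rw [Matrix.sub_mulVec, Matrix.smul_mulVec, Matrix.one_mulVec] at this
  simp only [star_trivial, dotProduct_sub, dotProduct_smul, smul_eq_mul] at this
  linarith

/-- **Riccati inequality for the smallest eigenvalue.** Let `S, R : (a,b) →
Mat(n×n,ℝ)` take symmetric values, with `S` differentiable and satisfying the
matrix Riccati equation `S' = -S² - R`. If the smallest eigenvalue function
`μ_min` of `S` is differentiable at `r₀ ∈ (a,b)` with derivative `m`, then
`m ≥ -μ_min(r₀)² - λ_max(R(r₀))`. -/
theorem mu_min_riccati_inequality {n : ℕ} (a b : ℝ)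
    (S R : ℝ → Matrix (Fin n) (Fin n) ℝ)
    (hSsym : ∀ r ∈ Ioo a b, (S r).IsSymm)
    (hRsym : ∀ r ∈ Ioo a b, (R r).IsSymm)
    (hODE : ∀ r ∈ Ioo a b, ∀ i j,
      HasDerivAt (fun s => S s i j) ((-(S r * S r) - R r) i j) r)
    (μmin : ℝ → ℝ)
    (hμ : ∀ r ∈ Ioo a b, IsMinEigenvalue (S r) (μmin r))
    (r₀ : ℝ) (hr₀ : r₀ ∈ Ioo a b)
    (m : ℝ) (hm : HasDerivAt μmin m r₀)
    (lR : ℝ) (hlR : IsMaxEigenvalue (R r₀) lR) :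
    -(μmin r₀) ^ 2 - lR ≤ m := by
  obtain ⟨⟨v, hv, hSv⟩, -⟩ := hμ r₀ hr₀
  have hpos : 0 < v ⬝ᵥ v := by
    have h1 : v ⬝ᵥ v ≠ 0 := fun h => hv (dotProduct_self_eq_zero.1 h)
    have h2 : 0 ≤ v ⬝ᵥ v := Finset.sum_nonneg fun i _ => mul_self_nonneg (v i)
    exact lt_of_le_of_ne h2 h1.symm
  have hq : HasDerivAt (fun s => v ⬝ᵥ (S s *ᵥ v))
      (v ⬝ᵥ ((-(S r₀ * S r₀) - R r₀) *ᵥ v)) r₀ := by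
    simp only [dotProduct, Matrix.mulVec]
    exact HasDerivAt.fun_sum fun i _ => HasDerivAt.const_mul _
      (HasDerivAt.fun_sum fun j _ => (hODE r₀ hr₀ i j).mul_const _)
  have hf := hq.sub (hm.mul_const (v ⬝ᵥ v))
  have hmin : IsLocalMin ((fun s => v ⬝ᵥ (S s *ᵥ v)) - fun s => μmin s * (v ⬝ᵥ v)) r₀ := by
    filter_upwards [Ioo_mem_nhds hr₀.1 hr₀.2] with r hr
    have := min_eig_quad (S r) (hSsym r hr) (μmin r) (hμ r hr).2 v
    simp only [Pi.sub_apply, hSv, dotProduct_smul, smul_eq_mul]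
    linarith
  have h0 := hmin.hasDerivAt_eq_zero hf
  have hR := min_eig_quad (-R r₀) (hRsym r₀ hr₀).neg (-lR) (by
    rintro μ' ⟨w, hw, hw'⟩
    have := hlR.2 (-μ') ⟨w, hw, by rw [neg_smul, ← hw', Matrix.neg_mulVec, neg_neg]⟩
    linarith) v
  simp only [Matrix.sub_mulVec, Matrix.neg_mulVec, ← Matrix.mulVec_mulVec, hSv, Matrix.mulVec_smul,
    dotProduct_sub, dotProduct_neg, dotProduct_smul, smul_eq_mul] at h0 hR
  refine le_of_mul_le_mul_right ?_ hpos
  nlinarith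
end

section
/- Let a < b, let S, R : [a,b) → Mat(n×n, ℝ) be maps with S(r) and R(r) symmetric for every r, the entries of S continuously differentiable, satisfying S'(r) = −S(r)² − R(r) for every r ∈ [a,b), and suppose there is c ∈ ℝ with ⟨R(r)x, x⟩ ≥ c|x|² for every r ∈ [a,b) and every x ∈ ℝⁿ. Then the largest eigenvalue μ_max of S satisfies μ_max(r) ≤ μ_max(a) − c(r − a) for every r ∈ [a,b); in particular μ_max is bounded above on every bounded subinterval. -/
open Set Filter Topology Matrix

theorem rayleigh_le_max {n : ℕ} (A : Matrix (Fin n) (Fin n) ℝ) (hA : A.IsSymm) (μ : ℝ)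
    (h : IsMaxEigenvalue A μ) (x : Fin n → ℝ) : A.mulVec x ⬝ᵥ x ≤ μ * (x ⬝ᵥ x) := by
  have hH : (μ • (1 : Matrix (Fin n) (Fin n) ℝ) - A).IsHermitian := by
    unfold Matrix.IsHermitian
    rw [Matrix.conjTranspose_eq_transpose_of_trivial]
    simp [hA.eq]
  have hP : (μ • (1 : Matrix (Fin n) (Fin n) ℝ) - A).PosSemidef := by
    rw [hH.posSemidef_iff_eigenvalues_nonneg]
    intro i
    have h1 := hH.mulVec_eigenvectorBasis i
    have h2 : μ - hH.eigenvalues i ≤ μ := by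
      apply h.2
      refine ⟨(hH.eigenvectorBasis i).ofLp, ?_, ?_⟩
      · intro h0
        exact hH.eigenvectorBasis.toBasis.ne_zero i (by
          ext j
          simpa using congrFun h0 j)
      · rw [Matrix.sub_mulVec, Matrix.smul_mulVec, Matrix.one_mulVec] at h1
        rw [sub_smul, ← h1]
        simp
    simp only [Pi.zero_apply]
    linarith
  have h3 := hP.dotProduct_mulVec_nonneg x
  rw [Matrix.sub_mulVec, Matrix.smul_mulVec, Matrix.one_mulVec] at h3
  simp only [star_trivial, dotProduct_sub, dotProduct_smul, smul_eq_mul] at h3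
  rw [dotProduct_comm (A.mulVec x)]
  linarith

/-- **Linear upper bound for the largest eigenvalue of a Riccati solution.**
Let `S, R : [a,b) → Mat(n×n,ℝ)` take symmetric values, with `S` having `C¹`
entries and satisfying `S' = -S² - R` on `[a,b)`, and assume
`⟨R(r)x, x⟩ ≥ c|x|²` for all `r` and `x`. Then the largest eigenvalue `μ_max`
of `S` satisfies `μ_max(r) ≤ μ_max(a) - c(r - a)` on `[a,b)`; in particular
`μ_max` is bounded above on every bounded subinterval. -/
theorem mu_max_linear_upper_bound {n : ℕ} (a b : ℝ) (hab : a < b)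
    (S R : ℝ → Matrix (Fin n) (Fin n) ℝ)
    (hSsym : ∀ r ∈ Ico a b, (S r).IsSymm)
    (hRsym : ∀ r ∈ Ico a b, (R r).IsSymm)
    (hC1 : ∀ i j, ContDiffOn ℝ 1 (fun r => S r i j) (Ico a b))
    (hODE : ∀ r ∈ Ico a b, ∀ i j,
      HasDerivWithinAt (fun s => S s i j) ((-(S r * S r) - R r) i j) (Ico a b) r)
    (c : ℝ)
    (hR : ∀ r ∈ Ico a b, ∀ x : Fin n → ℝ, c * (x ⬝ᵥ x) ≤ (R r).mulVec x ⬝ᵥ x)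
    (μmax : ℝ → ℝ)
    (hμ : ∀ r ∈ Ico a b, IsMaxEigenvalue (S r) (μmax r)) :
    (∀ r ∈ Ico a b, μmax r ≤ μmax a - c * (r - a)) ∧
    ∀ d ∈ Ico a b, ∃ C : ℝ, ∀ r ∈ Icc a d, μmax r ≤ C := by
  have key : ∀ r ∈ Ico a b, μmax r ≤ μmax a - c * (r - a) := by
    intro r hr
    have ha : a ∈ Ico a b := ⟨le_refl a, hab⟩
    obtain ⟨⟨x, hx0, hx⟩, -⟩ := hμ r hr
    have hpos : 0 < x ⬝ᵥ x := by
      have h := dotProduct_star_self_pos_iff.mpr hx0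
      simpa using h
    have hd : ∀ s ∈ Ico a b, HasDerivWithinAt
        (fun s => (S s).mulVec x ⬝ᵥ x + c * (s - a) * (x ⬝ᵥ x))
        ((-(S s * S s) - R s).mulVec x ⬝ᵥ x + c * 1 * (x ⬝ᵥ x)) (Ico a b) s := by
      intro s hs
      apply HasDerivWithinAt.add
      · simp only [Matrix.mulVec, dotProduct]
        refine HasDerivWithinAt.fun_sum fun i _ => ?_
        refine HasDerivWithinAt.mul_const ?_ (x i)
        refine HasDerivWithinAt.fun_sum fun j _ => ?_
        exact (hODE s hs i j).mul_const (x j)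
      · exact ((((hasDerivWithinAt_id s _).sub_const a).const_mul c).mul_const _)
    have hanti := antitoneOn_of_hasDerivWithinAt_nonpos (convex_Ico a b)
      (fun s hs => (hd s hs).continuousWithinAt)
      (fun s hs => (hd s (interior_subset hs)).mono interior_subset)
      (fun s hs => by
        have hs' := interior_subset hs
        have h1 := hR s hs' x
        have h2 : 0 ≤ (S s * S s).mulVec x ⬝ᵥ x := by
          rw [← Matrix.mulVec_mulVec, dotProduct_comm, Matrix.dotProduct_mulVec,
            ← Matrix.mulVec_transpose, (hSsym s hs').eq]
          exact Finset.sum_nonneg fun i _ => mul_self_nonneg _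
        rw [Matrix.sub_mulVec, Matrix.neg_mulVec, sub_dotProduct, neg_dotProduct]
        linarith)
    have h1 := hanti ha hr hr.1
    have h2 := rayleigh_le_max (S a) (hSsym a ha) (μmax a) (hμ a ha) x
    simp only [hx, smul_dotProduct, smul_eq_mul] at h1
    refine le_of_mul_le_mul_right ?_ hpos
    nlinarith
  refine ⟨key, fun d hd => ⟨μmax a + |c| * (d - a), fun r hr => ?_⟩⟩
  have h1 := key r ⟨hr.1, hr.2.trans_lt hd.2⟩
  have h2 : -c * (r - a) ≤ |c| * (d - a) :=
    mul_le_mul (neg_le_abs c) (by linarith [hr.2]) (by linarith [hr.1]) (abs_nonneg c)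
  linarith
end

section
/- Let a < b, let g, h : [a,b) → Mat(n×n, ℝ) be maps with g(r) symmetric positive definite and h(r) symmetric for every r, the entries of g continuously differentiable, satisfying g'(r) = 2h(r) for every r ∈ [a,b), and suppose there is C ∈ ℝ with ⟨h(r)x, x⟩ ≤ C⟨g(r)x, x⟩ for every r ∈ [a,b) and every x ∈ ℝⁿ. Then the largest eigenvalue λ_max of g satisfies λ_max(r) ≤ λ_max(a) e^{2C(r−a)} for every r ∈ [a,b). -/
open Set Filter Topology Matrix

/-- Rayleigh bound: the quadratic form is dominated by the largest eigenvalue. -/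
theorem rayleigh_le_of_isMax {n : ℕ} {A : Matrix (Fin n) (Fin n) ℝ} {μ : ℝ}
    (hA : A.IsHermitian) (hμ : IsMaxEigenvalue A μ) (x : Fin n → ℝ) :
    A.mulVec x ⬝ᵥ x ≤ μ * (x ⬝ᵥ x) := by
  have hB : (μ • (1 : Matrix (Fin n) (Fin n) ℝ) - A).IsHermitian := by
    refine Matrix.IsHermitian.sub ?_ hA
    simp [Matrix.IsHermitian]
  have hP : (μ • (1 : Matrix (Fin n) (Fin n) ℝ) - A).PosSemidef := by
    rw [hB.posSemidef_iff_eigenvalues_nonneg]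
    intro i
    have h1 := hB.mulVec_eigenvectorBasis i
    have h2 := hμ.2 (μ - hB.eigenvalues i) ⟨hB.eigenvectorBasis i, ?_, ?_⟩
    · simpa using h2
    · intro h0
      exact hB.eigenvectorBasis.orthonormal.ne_zero i (by ext j; exact congrFun h0 j)
    · rw [Matrix.sub_mulVec, Matrix.smul_mulVec, Matrix.one_mulVec] at h1
      rw [sub_smul, ← h1]
      abel
  have h3 := hP.dotProduct_mulVec_nonneg x
  rw [Matrix.sub_mulVec, Matrix.smul_mulVec, Matrix.one_mulVec, dotProduct_sub,
    dotProduct_smul, star_trivial, smul_eq_mul, dotProduct_comm x (A.mulVec x)] at h3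
  linarith

/-- **Exponential upper bound for the metric coefficients.** Let
`g, h : [a,b) → Mat(n×n,ℝ)` with `g(r)` symmetric positive definite and `h(r)`
symmetric, `g` with `C¹` entries satisfying `g' = 2h` on `[a,b)`, and assume
`⟨h(r)x, x⟩ ≤ C⟨g(r)x, x⟩` for all `r` and `x`. Then the largest eigenvalue
`λ_max` of `g` satisfies `λ_max(r) ≤ λ_max(a) e^{2C(r-a)}` on `[a,b)`. -/
theorem lambda_max_exponential_bound {n : ℕ} (a b : ℝ) (hab : a < b)
    (g h : ℝ → Matrix (Fin n) (Fin n) ℝ)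
    (hgpos : ∀ r ∈ Ico a b, (g r).PosDef)
    (hhsym : ∀ r ∈ Ico a b, (h r).IsSymm)
    (hC1 : ∀ i j, ContDiffOn ℝ 1 (fun r => g r i j) (Ico a b))
    (hODE : ∀ r ∈ Ico a b, ∀ i j,
      HasDerivWithinAt (fun s => g s i j) (2 * h r i j) (Ico a b) r)
    (C : ℝ)
    (hhg : ∀ r ∈ Ico a b, ∀ x : Fin n → ℝ,
      (h r).mulVec x ⬝ᵥ x ≤ C * ((g r).mulVec x ⬝ᵥ x))
    (lmax : ℝ → ℝ)
    (hl : ∀ r ∈ Ico a b, IsMaxEigenvalue (g r) (lmax r)) :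
    ∀ r ∈ Ico a b, lmax r ≤ lmax a * Real.exp (2 * C * (r - a)) := by
  intro r hr
  obtain ⟨⟨x, hx0, hx⟩, -⟩ := hl r hr
  have ha : a ∈ Ico a b := ⟨le_rfl, hab⟩
  have hxx : 0 < x ⬝ᵥ x := by
    have h1 : 0 ≤ x ⬝ᵥ x := Finset.sum_nonneg fun i _ => mul_self_nonneg (x i)
    exact lt_of_le_of_ne h1 fun h0 => hx0 (dotProduct_self_eq_zero.1 h0.symm)
  have hF : ∀ s ∈ Ico a b, HasDerivWithinAt (fun t => (g t).mulVec x ⬝ᵥ x)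
      (2 * ((h s).mulVec x ⬝ᵥ x)) (Ico a b) s := by
    intro s hs
    have h1 : HasDerivWithinAt (fun t => ∑ i, (∑ j, g t i j * x j) * x i)
        (∑ i, (∑ j, (2 * h s i j) * x j) * x i) (Ico a b) s :=
      HasDerivWithinAt.fun_sum fun i _ =>
        (HasDerivWithinAt.fun_sum fun j _ => (hODE s hs i j).mul_const (x j)).mul_const (x i)
    suffices h2 : 2 * ((h s).mulVec x ⬝ᵥ x) = ∑ i, (∑ j, (2 * h s i j) * x j) * x i by
      rw [h2]
      exact h1
    simp only [dotProduct, mulVec, Finset.mul_sum, Finset.sum_mul]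
    refine Finset.sum_congr rfl fun i _ => Finset.sum_congr rfl fun j _ => ?_
    ring
  have hE : ∀ s, HasDerivAt (fun t => Real.exp (-(2 * C * (t - a))))
      (Real.exp (-(2 * C * (s - a))) * (-(2 * C))) s := by
    intro s
    have h1 : HasDerivAt (fun t : ℝ => -(2 * C * (t - a))) (-(2 * C)) s := by
      simpa using (((hasDerivAt_id s).sub_const a).const_mul (2 * C)).fun_neg
    exact h1.exp
  have hG := fun s hs => (hF s hs).mul (hE s).hasDerivWithinAt
  have hanti : AntitoneOn (fun t => ((g t).mulVec x ⬝ᵥ x) * Real.exp (-(2 * C * (t - a))))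
      (Ico a b) := by
    refine antitoneOn_of_hasDerivWithinAt_nonpos (convex_Ico a b)
      (fun s hs => (hG s hs).continuousWithinAt)
      (fun s hs => (hG s (interior_subset hs)).mono interior_subset) ?_
    intro s hs
    have h1 := hhg s (interior_subset hs) x
    have h2 := Real.exp_pos (-(2 * C * (s - a)))
    nlinarith
  have h1 := hanti ha hr hr.1
  have h2 := rayleigh_le_of_isMax (hgpos a ha).1 (hl a ha) x
  simp only [hx, smul_dotProduct, smul_eq_mul, sub_self, mul_zero, neg_zero, Real.exp_zero,
    mul_one, Real.exp_neg] at h1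
  rw [← div_eq_mul_inv, div_le_iff₀ (Real.exp_pos _)] at h1
  have h3 := mul_le_mul_of_nonneg_right h2 (Real.exp_pos (2 * C * (r - a))).le
  refine le_of_mul_le_mul_right ?_ hxx
  linarith
end

section
/- Let a < b, let g, h : [a,b) → Mat(n×n, ℝ) be maps with g(r) symmetric positive definite and h(r) symmetric for every r, the entries of g continuously differentiable, satisfying g'(r) = 2h(r) for every r ∈ [a,b), and suppose there is c ∈ ℝ with ⟨h(r)x, x⟩ ≥ c⟨g(r)x, x⟩ for every r ∈ [a,b) and every x ∈ ℝⁿ. Then the smallest eigenvalue λ_min of g satisfies λ_min(r) ≥ λ_min(a) e^{2c(r−a)} > 0 for every r ∈ [a,b); in particular g(r) remains positive definite and nondegenerate on [a,b). -/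
open Set Filter Topology Matrix

theorem rayleigh_of_isMinEigenvalue {n : ℕ} (A : Matrix (Fin n) (Fin n) ℝ) (μ : ℝ)
    (hA : A.IsHermitian) (hμ : IsMinEigenvalue A μ) (x : Fin n → ℝ) :
    μ * (x ⬝ᵥ x) ≤ A.mulVec x ⬝ᵥ x := by
  have hB : (A - μ • (1 : Matrix (Fin n) (Fin n) ℝ)).IsHermitian := by
    refine hA.sub ?_
    simp [Matrix.IsHermitian]
  have hP : (A - μ • (1 : Matrix (Fin n) (Fin n) ℝ)).PosSemidef := by
    rw [hB.posSemidef_iff_eigenvalues_nonneg]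
    intro i
    have h1 := hB.mulVec_eigenvectorBasis i
    have h2 := hμ.2 (hB.eigenvalues i + μ) ⟨(hB.eigenvectorBasis i).ofLp, ?_, ?_⟩
    · simp only [Pi.zero_apply]
      linarith
    · intro h0
      have h3 := hB.eigenvectorBasis.toBasis.ne_zero i
      apply h3
      ext j
      simpa using congrFun h0 j
    · rw [Matrix.sub_mulVec, Matrix.smul_mulVec, Matrix.one_mulVec] at h1
      rw [add_smul, ← h1]
      simp
  have h4 := hP.dotProduct_mulVec_nonneg x
  rw [Matrix.sub_mulVec, Matrix.smul_mulVec, Matrix.one_mulVec, dotProduct_sub,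
    dotProduct_smul] at h4
  simp only [star_trivial, smul_eq_mul] at h4
  rw [dotProduct_comm (A.mulVec x)]
  linarith

/-- **Exponential lower bound for the metric coefficients (nondegeneracy).**
Let `g, h : [a,b) → Mat(n×n,ℝ)` with `g(r)` symmetric positive definite and
`h(r)` symmetric, `g` with `C¹` entries satisfying `g' = 2h` on `[a,b)`, and
assume `⟨h(r)x, x⟩ ≥ c⟨g(r)x, x⟩` for all `r` and `x`. Then the smallest
eigenvalue `λ_min` of `g` satisfies `λ_min(r) ≥ λ_min(a) e^{2c(r-a)} > 0` on
`[a,b)`: the metric coefficients stay nondegenerate. -/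
theorem lambda_min_exponential_lower_bound {n : ℕ} (a b : ℝ) (hab : a < b)
    (g h : ℝ → Matrix (Fin n) (Fin n) ℝ)
    (hgpos : ∀ r ∈ Ico a b, (g r).PosDef)
    (hhsym : ∀ r ∈ Ico a b, (h r).IsSymm)
    (hC1 : ∀ i j, ContDiffOn ℝ 1 (fun r => g r i j) (Ico a b))
    (hODE : ∀ r ∈ Ico a b, ∀ i j,
      HasDerivWithinAt (fun s => g s i j) (2 * h r i j) (Ico a b) r)
    (c : ℝ)
    (hhg : ∀ r ∈ Ico a b, ∀ x : Fin n → ℝ,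
      c * ((g r).mulVec x ⬝ᵥ x) ≤ (h r).mulVec x ⬝ᵥ x)
    (lmin : ℝ → ℝ)
    (hl : ∀ r ∈ Ico a b, IsMinEigenvalue (g r) (lmin r)) :
    ∀ r ∈ Ico a b,
      lmin a * Real.exp (2 * c * (r - a)) ≤ lmin r ∧
      0 < lmin a * Real.exp (2 * c * (r - a)) := by
  intro r hr
  have ha : a ∈ Ico a b := ⟨le_rfl, hab⟩
  have hxx : ∀ x : Fin n → ℝ, x ≠ 0 → 0 < x ⬝ᵥ x := fun x hx => by
    have := dotProduct_star_self_pos_iff.2 hx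
    simpa using this
  constructor
  · obtain ⟨x, hx, hxe⟩ := (hl r hr).1
    have hd : ∀ s ∈ Ico a b, HasDerivWithinAt (fun s => (g s).mulVec x ⬝ᵥ x)
        (2 * ((h s).mulVec x ⬝ᵥ x)) (Ico a b) s := by
      intro s hs
      have : HasDerivWithinAt (fun s => ∑ i, (∑ j, g s i j * x j) * x i)
          (∑ i, (∑ j, (2 * h s i j) * x j) * x i) (Ico a b) s :=
        HasDerivWithinAt.fun_sum fun i _ => HasDerivWithinAt.mul_const
          (HasDerivWithinAt.fun_sum fun j _ => (hODE s hs i j).mul_const _) _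
      refine HasDerivWithinAt.congr_deriv (f := fun s => (g s).mulVec x ⬝ᵥ x) this ?_
      simp only [dotProduct, mulVec, Finset.mul_sum, Finset.sum_mul]
      exact Finset.sum_congr rfl fun i _ => Finset.sum_congr rfl fun j _ => by ring
    have he : ∀ s, HasDerivAt (fun s => Real.exp (-(2 * c * (s - a))))
        (Real.exp (-(2 * c * (s - a))) * (-(2 * c))) s := by
      intro s
      have := ((((hasDerivAt_id s).sub_const a).const_mul (2 * c)).neg).exp
      simpa using this
    have hf : ∀ s ∈ Ico a b, HasDerivWithinAt
        (fun s => ((g s).mulVec x ⬝ᵥ x) * Real.exp (-(2 * c * (s - a)))) _ (Ico a b) s :=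
      fun s hs => (hd s hs).mul (he s).hasDerivWithinAt
    have hm : MonotoneOn
        (fun s => ((g s).mulVec x ⬝ᵥ x) * Real.exp (-(2 * c * (s - a)))) (Ico a b) := by
      refine monotoneOn_of_hasDerivWithinAt_nonneg (convex_Ico a b)
        (fun s hs => (hf s hs).continuousWithinAt)
        (fun s hs => (hf s (interior_subset hs)).mono interior_subset) ?_
      intro s hs
      have h1 := hhg s (interior_subset hs) x
      have h2 := mul_nonneg (sub_nonneg.2 h1) (Real.exp_pos (-(2 * c * (s - a)))).le
      linarith
    have h1 := hm ha hr hr.1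
    simp only [hxe, sub_self, mul_zero, neg_zero, Real.exp_zero, mul_one, smul_dotProduct,
      smul_eq_mul] at h1
    have h2 := rayleigh_of_isMinEigenvalue (g a) (lmin a) (hgpos a ha).isHermitian (hl a ha) x
    have h3 : lmin a ≤ lmin r * Real.exp (-(2 * c * (r - a))) := by
      refine le_of_mul_le_mul_right ?_ (hxx x hx)
      linarith
    rw [Real.exp_neg, ← div_eq_mul_inv, le_div_iff₀ (Real.exp_pos _)] at h3
    exact h3
  · obtain ⟨x, hx, hxe⟩ := (hl a ha).1
    refine mul_pos ?_ (Real.exp_pos _)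
    have h1 := (hgpos a ha).dotProduct_mulVec_pos hx
    rw [hxe, dotProduct_smul, star_trivial, smul_eq_mul] at h1
    exact (pos_iff_pos_of_mul_pos h1).2 (hxx x hx)
end

section
/- Let b > 0 and let f, g : (0,b) → ℝ be measurable functions with f(t) > 0 and g(t) > 0 for every t ∈ (0,b), both integrable on (0,r) for every r ∈ (0,b), and such that the ratio t ↦ f(t)/g(t) is nonincreasing on (0,b). Then the function r ↦ (∫₀^r f(t) dt) / (∫₀^r g(t) dt) is nonincreasing on (0,b). -/
open Set Filter Topology MeasureTheory

/-- **Ratio-monotonicity lemma for integrals (Bishop–Gromov step).** If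
`f, g : (0,b) → ℝ` are measurable, positive, integrable on `(0,r)` for every
`r ∈ (0,b)`, and the ratio `f/g` is nonincreasing on `(0,b)`, then
`r ↦ (∫₀^r f) / (∫₀^r g)` is nonincreasing on `(0,b)`. -/
theorem integral_ratio_antitone
    (b : ℝ) (hb : 0 < b)
    (f g : ℝ → ℝ)
    (hfm : AEMeasurable f ((volume : Measure ℝ).restrict (Ioo 0 b)))
    (hgm : AEMeasurable g ((volume : Measure ℝ).restrict (Ioo 0 b)))
    (hfpos : ∀ t ∈ Ioo (0:ℝ) b, 0 < f t)
    (hgpos : ∀ t ∈ Ioo (0:ℝ) b, 0 < g t)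
    (hfint : ∀ r ∈ Ioo (0:ℝ) b, IntegrableOn f (Ioo 0 r))
    (hgint : ∀ r ∈ Ioo (0:ℝ) b, IntegrableOn g (Ioo 0 r))
    (hratio : AntitoneOn (fun t => f t / g t) (Ioo (0:ℝ) b)) :
    AntitoneOn (fun r => (∫ t in Ioo (0:ℝ) r, f t) / (∫ t in Ioo (0:ℝ) r, g t))
      (Ioo (0:ℝ) b) := by
  intro r hr s hs hrs
  have hu : Ioo (0:ℝ) s = Ioo 0 r ∪ Ico r s := (Ioo_union_Ico_eq_Ioo hr.1 hrs).symm
  have hd : Disjoint (Ioo (0:ℝ) r) (Ico r s) := by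
    rw [Set.disjoint_left]
    intro x hx hx'
    exact absurd hx.2 (not_lt.mpr hx'.1)
  have hsub : Ico r s ⊆ Ioo 0 s := fun x hx => ⟨lt_of_lt_of_le hr.1 hx.1, hx.2⟩
  have hfI := (hfint s hs).mono_set hsub
  have hgI := (hgint s hs).mono_set hsub
  have hF : ∫ t in Ioo (0:ℝ) s, f t = (∫ t in Ioo (0:ℝ) r, f t) + ∫ t in Ico r s, f t := by
    rw [hu]; exact setIntegral_union hd measurableSet_Ico (hfint r hr) hfI
  have hG : ∫ t in Ioo (0:ℝ) s, g t = (∫ t in Ioo (0:ℝ) r, g t) + ∫ t in Ico r s, g t := by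
    rw [hu]; exact setIntegral_union hd measurableSet_Ico (hgint r hr) hgI
  have hpos : ∀ u ∈ Ioo (0:ℝ) b, 0 < ∫ t in Ioo (0:ℝ) u, g t := by
    intro u hu
    have hin : ∀ t ∈ Ioo (0:ℝ) u, 0 < g t := fun t ht => hgpos t ⟨ht.1, ht.2.trans hu.2⟩
    rw [setIntegral_pos_iff_support_of_nonneg_ae
      ((ae_restrict_iff' measurableSet_Ioo).2 (Eventually.of_forall fun t ht => (hin t ht).le))
      (hgint u hu)]
    have : Function.support g ∩ Ioo 0 u = Ioo 0 u :=
      inter_eq_right.2 fun t ht => (hin t ht).ne'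
    rw [this, Real.volume_Ioo]
    simpa using hu.1
  have hB : 0 ≤ ∫ t in Ico r s, g t :=
    setIntegral_nonneg measurableSet_Ico fun t ht =>
      (hgpos t ⟨hr.1.trans_le ht.1, ht.2.trans hs.2⟩).le
  have h1 : (f r / g r) * (∫ t in Ioo (0:ℝ) r, g t) ≤ ∫ t in Ioo (0:ℝ) r, f t := by
    rw [← integral_const_mul]
    refine setIntegral_mono_on ((hgint r hr).const_mul _) (hfint r hr) measurableSet_Ioo ?_
    intro t ht
    have htb : t ∈ Ioo (0:ℝ) b := ⟨ht.1, ht.2.trans hr.2⟩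
    exact (le_div_iff₀ (hgpos t htb)).1 (hratio htb hr ht.2.le)
  have h2 : (∫ t in Ico r s, f t) ≤ (f r / g r) * ∫ t in Ico r s, g t := by
    rw [← integral_const_mul]
    refine setIntegral_mono_on hfI (hgI.const_mul _) measurableSet_Ico ?_
    intro t ht
    have htb : t ∈ Ioo (0:ℝ) b := ⟨hr.1.trans_le ht.1, ht.2.trans hs.2⟩
    exact (div_le_iff₀ (hgpos t htb)).1 (hratio hr htb ht.1)
  have hGr := hpos r hr
  have hGs := hpos s hs
  show (∫ t in Ioo (0:ℝ) s, f t) / (∫ t in Ioo (0:ℝ) s, g t)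
    ≤ (∫ t in Ioo (0:ℝ) r, f t) / (∫ t in Ioo (0:ℝ) r, g t)
  rw [div_le_div_iff₀ hGs hGr, hF, hG]
  have h3 := mul_le_mul_of_nonneg_right h2 hGr.le
  have h4 := mul_le_mul_of_nonneg_right h1 hB
  nlinarith
end
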